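/- Let A = (1/(2·log 2)) · Σ_{k=0}^∞ m_k (log 2)^k / k! (this series converges absolutely since 0 ≤ m_k ≤ 1). Then there is a constant C > 0 such that for every L ≥ 0, |M_L − A · (log 2)^(−L) · L!| ≤ C · 6.3^(−L) · L!. In particular M_L ~ A · (log 2)^(−L) · L! as L → ∞. -/

import Mathlib

open Filter

/-- The generations of the Calkin–Wilf tree: `CW 0 = [1/1]` is the first
generation, and each generation is obtained from the previous one by replacing
each entry `x` by `x/(x+1)` and `x+1`, in this order.  Thus the `n`-th
generation of the paper is `CW (n-1)`. -/
def CW : ℕ → List ℚ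
  | 0 => [1]
  | n + 1 => (CW n).flatMap (fun x => [x / (x + 1), x + 1])

open scoped Classical in
/-- `Fcw n` is the distribution function of the `(n+1)`-st generation of the
Calkin–Wilf tree: `Fcw (n-1) x = F_n(x) = 2^(1-n) · #{j : x_j^(n) ≤ x}`. -/
noncomputable def Fcw (n : ℕ) (x : ℝ) : ℝ :=
  ((CW n).countP (fun q => decide ((q : ℝ) ≤ x))) / 2 ^ n

open MeasureTheory Real

lemma CW_pos (n : ℕ) : ∀ q ∈ CW n, 0 < q := by
  induction n with
  | zero => intro q hq; simp [CW] at hq; simp [hq]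
  | succ n ih =>
    intro q hq
    simp only [CW, List.mem_flatMap] at hq
    obtain ⟨x, hx, hq⟩ := hq
    have := ih x hx
    simp at hq
    rcases hq with rfl | rfl <;> positivity

lemma CW_length (n : ℕ) : (CW n).length = 2 ^ n := by
  induction n with
  | zero => simp [CW]
  | succ n ih =>
    simp [CW, List.length_flatMap, ih, pow_succ]

lemma countP_pairs (l : List ℚ) (p : ℚ → Bool) :
    (l.flatMap (fun x => [x / (x + 1), x + 1])).countP p =
      l.countP (fun x => p (x / (x + 1))) + l.countP (fun x => p (x + 1)) := by
  induction l with
  | nil => simp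
  | cons a l ih =>
    simp only [List.flatMap_cons, List.countP_append, ih, List.countP_cons, List.countP_nil]
    omega

open scoped Classical in
lemma Fcw_eq (n : ℕ) (x : ℝ) :
    Fcw n x = ((CW n).countP (fun q : ℚ => decide ((q : ℝ) ≤ x)) : ℝ) / 2 ^ n := by
  unfold Fcw
  have : ∀ l : List ℚ, (do let a ← l; pure (a : ℝ) : List ℝ) = l.map (fun q : ℚ => (q : ℝ)) := by
    intro l
    simp [← List.map_eq_flatMap]
  rw [this, List.countP_map]
  rfl

lemma Fcw_zero (n : ℕ) : Fcw n 0 = 0 := by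
  rw [Fcw_eq]
  have : (CW n).countP (fun q : ℚ => decide ((q : ℝ) ≤ 0)) = 0 := by
    rw [List.countP_eq_zero]
    intro q hq
    have := CW_pos n q hq
    simpa using this
  rw [this]; simp

lemma Fcw_succ_ge (n : ℕ) (x : ℝ) (hx : 0 ≤ x) : Fcw (n + 1) (x + 1) = (1 + Fcw n x) / 2 := by
  rw [Fcw_eq, Fcw_eq]
  have h1 : (CW n).countP (fun q : ℚ => decide (((q / (q + 1) : ℚ) : ℝ) ≤ x + 1)) = 2 ^ n := by
    rw [← CW_length n, List.countP_eq_length]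
    intro q hq
    have h := CW_pos n q hq
    have hle : q / (q + 1) ≤ 1 := by rw [div_le_one (by positivity)]; linarith
    have h2 : ((q / (q + 1) : ℚ) : ℝ) ≤ 1 := by exact_mod_cast hle
    simp only [decide_eq_true_eq]
    linarith
  have h2 : (CW n).countP (fun q : ℚ => decide (((q + 1 : ℚ) : ℝ) ≤ x + 1)) =
      (CW n).countP (fun q : ℚ => decide ((q : ℝ) ≤ x)) := by
    apply List.countP_congr
    intro q hq
    simp
  rw [CW, countP_pairs, h1, h2]
  push_cast
  rw [pow_succ]
  field_simp

lemma Fcw_succ_lt (n : ℕ) (x : ℝ) (hx1 : x < 1) :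
    Fcw (n + 1) x = Fcw n (x / (1 - x)) / 2 := by
  rw [Fcw_eq, Fcw_eq]
  have h1 : (CW n).countP (fun q : ℚ => decide (((q / (q + 1) : ℚ) : ℝ) ≤ x)) =
      (CW n).countP (fun q : ℚ => decide ((q : ℝ) ≤ x / (1 - x))) := by
    apply List.countP_congr
    intro q hq
    have h : (0 : ℝ) < q := by exact_mod_cast CW_pos n q hq
    simp only [decide_eq_true_eq]
    push_cast
    rw [div_le_iff₀ (by positivity), le_div_iff₀ (by linarith)]
    constructor <;> intro h <;> nlinarith
  have h2 : (CW n).countP (fun q : ℚ => decide (((q + 1 : ℚ) : ℝ) ≤ x)) = 0 := by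
    rw [List.countP_eq_zero]
    intro q hq
    have h : (0 : ℝ) < q := by exact_mod_cast CW_pos n q hq
    simp only [decide_eq_true_eq]
    push_cast
    linarith
  rw [CW, countP_pairs, h1, h2]
  push_cast
  rw [pow_succ]
  field_simp
  ring


lemma F_zero {F : ℝ → ℝ} (hF : ∀ x : ℝ, 0 ≤ x → Tendsto (fun n => Fcw n x) atTop (nhds (F x))) : F 0 = 0 := by
  have := hF 0 le_rfl
  simp only [Fcw_zero] at this
  exact tendsto_nhds_unique this tendsto_const_nhds

lemma F_add_one {F : ℝ → ℝ} (hF : ∀ x : ℝ, 0 ≤ x → Tendsto (fun n => Fcw n x) atTop (nhds (F x)))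
    (x : ℝ) (hx : 0 ≤ x) : F (x + 1) = (1 + F x) / 2 := by
  have h1 := (hF (x + 1) (by linarith)).comp (tendsto_add_atTop_nat 1)
  have h2 : Tendsto (fun n => (1 + Fcw n x) / 2) atTop (nhds ((1 + F x) / 2)) :=
    ((hF x hx).const_add 1).div_const 2
  refine tendsto_nhds_unique h1 (h2.congr fun n => ?_)
  simp [Fcw_succ_ge n x hx]

lemma F_lt_one {F : ℝ → ℝ} (hF : ∀ x : ℝ, 0 ≤ x → Tendsto (fun n => Fcw n x) atTop (nhds (F x)))
    (x : ℝ) (hx : 0 ≤ x) (hx1 : x < 1) : F x = F (x / (1 - x)) / 2 := by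
  have h1 := (hF x hx).comp (tendsto_add_atTop_nat 1)
  have h2 : Tendsto (fun n => Fcw n (x / (1 - x)) / 2) atTop (nhds (F (x / (1 - x)) / 2)) :=
    (hF _ (div_nonneg hx (by linarith))).div_const 2
  refine tendsto_nhds_unique h1 (h2.congr fun n => ?_)
  simp [Fcw_succ_lt n x hx1]

lemma F_nat {F : ℝ → ℝ} (hF : ∀ x : ℝ, 0 ≤ x → Tendsto (fun n => Fcw n x) atTop (nhds (F x)))
    (n : ℕ) : F n = 1 - (1 / 2) ^ n := by
  induction n with
  | zero => simp [F_zero hF]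
  | succ n ih =>
    push_cast
    rw [F_add_one hF n (by positivity), ih, pow_succ]
    ring


/-- The measure facts we need. -/
lemma mu_Ioc {F : ℝ → ℝ} (hF : ∀ x : ℝ, 0 ≤ x → Tendsto (fun n => Fcw n x) atTop (nhds (F x)))
    {μ : Measure ℝ}
    (hμ : ∀ a b : ℝ, a ≤ b → μ (Set.Ioc a b) = ENNReal.ofReal (F b - F a)) (n : ℕ) :
    μ (Set.Ioc (n : ℝ) (n + 1)) = ENNReal.ofReal ((1 / 2) ^ (n + 1)) := by
  rw [hμ _ _ (by linarith), F_add_one hF n (by positivity), F_nat hF]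
  congr 1
  rw [pow_succ]; ring

lemma mu_Iic_zero {F : ℝ → ℝ} (hF : ∀ x : ℝ, 0 ≤ x → Tendsto (fun n => Fcw n x) atTop (nhds (F x)))
    {μ : Measure ℝ} [IsProbabilityMeasure μ]
    (hμ : ∀ a b : ℝ, a ≤ b → μ (Set.Ioc a b) = ENNReal.ofReal (F b - F a)) :
    μ (Set.Iic 0) = 0 := by
  have key : ∀ n : ℕ, μ.real (Set.Iic 0) ≤ (1 / 2 : ℝ) ^ n := by
    intro n
    have h1 : μ.real (Set.Ioc 0 (n : ℝ)) = 1 - (1 / 2) ^ n := by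
      rw [measureReal_def, hμ _ _ (by positivity), F_nat hF, F_zero hF, sub_zero,
        ENNReal.toReal_ofReal]
      have : (1 / 2 : ℝ) ^ n ≤ 1 := pow_le_one₀ (by norm_num) (by norm_num)
      linarith
    have h2 : μ.real (Set.Iic 0 ∪ Set.Ioc 0 (n : ℝ)) = μ.real (Set.Iic 0) + μ.real (Set.Ioc 0 (n:ℝ)) :=
      measureReal_union (Set.Iic_disjoint_Ioc le_rfl) measurableSet_Ioc
    have h3 : μ.real (Set.Iic 0 ∪ Set.Ioc 0 (n : ℝ)) ≤ 1 := measureReal_le_one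
    linarith
  have h0 : μ.real (Set.Iic 0) ≤ 0 :=
    ge_of_tendsto' (tendsto_pow_atTop_nhds_zero_of_lt_one (by norm_num) (by norm_num)) key
  have h1 : μ.real (Set.Iic 0) = 0 := le_antisymm h0 measureReal_nonneg
  rwa [measureReal_eq_zero_iff] at h1

lemma mu_ae_pos {F : ℝ → ℝ} (hF : ∀ x : ℝ, 0 ≤ x → Tendsto (fun n => Fcw n x) atTop (nhds (F x)))
    {μ : Measure ℝ} [IsProbabilityMeasure μ]
    (hμ : ∀ a b : ℝ, a ≤ b → μ (Set.Ioc a b) = ENNReal.ofReal (F b - F a)) :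
    ∀ᵐ x ∂μ, 0 < x := by
  rw [ae_iff]
  convert mu_Iic_zero hF hμ using 2
  ext x; simp

lemma mu_Iic {F : ℝ → ℝ} (hF : ∀ x : ℝ, 0 ≤ x → Tendsto (fun n => Fcw n x) atTop (nhds (F x)))
    {μ : Measure ℝ} [IsProbabilityMeasure μ]
    (hμ : ∀ a b : ℝ, a ≤ b → μ (Set.Ioc a b) = ENNReal.ofReal (F b - F a)) (b : ℝ) (hb : 0 ≤ b) :
    μ (Set.Iic b) = ENNReal.ofReal (F b) := by
  rw [← Set.Iic_union_Ioc_eq_Iic hb, measure_union (Set.Iic_disjoint_Ioc le_rfl) measurableSet_Ioc,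
    mu_Iic_zero hF hμ, hμ _ _ hb, F_zero hF]
  simp

lemma F_nonneg {F : ℝ → ℝ} (hF : ∀ x : ℝ, 0 ≤ x → Tendsto (fun n => Fcw n x) atTop (nhds (F x)))
    (b : ℝ) (hb : 0 ≤ b) : 0 ≤ F b := by
  refine ge_of_tendsto' (hF b hb) fun n => ?_
  rw [Fcw_eq]; positivity

lemma mu_Iic_neg {F : ℝ → ℝ} (hF : ∀ x : ℝ, 0 ≤ x → Tendsto (fun n => Fcw n x) atTop (nhds (F x)))
    {μ : Measure ℝ} [IsProbabilityMeasure μ]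
    (hμ : ∀ a b : ℝ, a ≤ b → μ (Set.Ioc a b) = ENNReal.ofReal (F b - F a)) (b : ℝ) (hb : b ≤ 0) :
    μ (Set.Iic b) = 0 :=
  measure_mono_null (Set.Iic_subset_Iic.2 hb) (mu_Iic_zero hF hμ)

lemma mu_invariant {F : ℝ → ℝ} (hF : ∀ x : ℝ, 0 ≤ x → Tendsto (fun n => Fcw n x) atTop (nhds (F x)))
    {μ : Measure ℝ} [IsProbabilityMeasure μ]
    (hμ : ∀ a b : ℝ, a ≤ b → μ (Set.Ioc a b) = ENNReal.ofReal (F b - F a)) :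
    μ + μ = μ.map (fun x => x + 1) + μ.map (fun x => x / (x + 1)) := by
  have hpos := mu_ae_pos hF hμ
  have hT : Measurable (fun x : ℝ => x / (x + 1)) := by fun_prop
  have hS : Measurable (fun x : ℝ => x + 1) := by fun_prop
  have : IsFiniteMeasure (μ.map (fun x : ℝ => x + 1)) := inferInstance
  apply Measure.ext_of_Iic
  intro b
  rw [Measure.add_apply, Measure.add_apply, Measure.map_apply hS measurableSet_Iic,
    Measure.map_apply hT measurableSet_Iic]
  have e1 : (fun x : ℝ => x + 1) ⁻¹' Set.Iic b = Set.Iic (b - 1) := by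
    ext x; simp [le_sub_iff_add_le]
  rw [e1]
  rcases lt_or_ge b 0 with hb | hb
  · rw [mu_Iic_neg hF hμ b hb.le, mu_Iic_neg hF hμ (b - 1) (by linarith)]
    have : μ ((fun x : ℝ => x / (x + 1)) ⁻¹' Set.Iic b) = 0 := by
      rw [measure_eq_zero_iff_ae_notMem]
      filter_upwards [hpos] with x hx
      simp only [Set.mem_preimage, Set.mem_Iic, not_le]
      exact hb.trans (by positivity)
    rw [this]
  rcases lt_or_ge b 1 with hb1 | hb1
  · rw [mu_Iic_neg hF hμ (b - 1) (by linarith)]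
    have : μ ((fun x : ℝ => x / (x + 1)) ⁻¹' Set.Iic b) = μ (Set.Iic (b / (1 - b))) := by
      apply measure_congr
      filter_upwards [hpos] with x hx
      apply propext
      change x / (x + 1) ≤ b ↔ x ≤ b / (1 - b)
      rw [div_le_iff₀ (by positivity), le_div_iff₀ (by linarith)]
      constructor <;> intro h <;> nlinarith
    have hb2 : 0 ≤ b / (1 - b) := div_nonneg hb (by linarith)
    rw [this, mu_Iic hF hμ b hb, mu_Iic hF hμ _ hb2, F_lt_one hF b hb hb1, zero_add,
      ← ENNReal.ofReal_add]
    · congr 1; ring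
    all_goals have := F_nonneg hF _ hb2; positivity
  · have : μ ((fun x : ℝ => x / (x + 1)) ⁻¹' Set.Iic b) = 1 := by
      rw [prob_compl_eq_zero_iff (hT measurableSet_Iic) |>.symm, measure_eq_zero_iff_ae_notMem]
      filter_upwards [hpos] with x hx
      simp only [Set.mem_compl_iff, Set.mem_preimage, Set.mem_Iic, not_not]
      refine le_trans ?_ hb1
      rw [div_le_one (by positivity)]; linarith
    have h := F_add_one hF (b - 1) (by linarith)
    rw [sub_add_cancel] at h
    have h0 := F_nonneg hF (b - 1) (by linarith)
    rw [this, mu_Iic hF hμ b hb, mu_Iic hF hμ _ (by linarith), h, ← ENNReal.ofReal_one,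
      ← ENNReal.ofReal_add (by positivity) (by positivity),
      ← ENNReal.ofReal_add (by positivity) (by positivity)]
    congr 1; ring

lemma mu_exp_integrable {F : ℝ → ℝ}
    (hF : ∀ x : ℝ, 0 ≤ x → Tendsto (fun n => Fcw n x) atTop (nhds (F x)))
    {μ : Measure ℝ} [IsProbabilityMeasure μ]
    (hμ : ∀ a b : ℝ, a ≤ b → μ (Set.Ioc a b) = ENNReal.ofReal (F b - F a)) :
    Integrable (fun x => Real.exp (Real.log (3 / 2) * x)) μ := by
  have hpos := mu_ae_pos hF hμ
  have hlog : 0 < Real.log (3 / 2) := Real.log_pos (by norm_num)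
  refine ⟨by fun_prop, ?_⟩
  rw [hasFiniteIntegral_iff_ofReal (ae_of_all _ fun x => (Real.exp_pos _).le)]
  have hU : Set.Ioi (0:ℝ) ⊆ ⋃ n : ℕ, Set.Ioc (n : ℝ) (n + 1) := by
    intro x hx
    have hx : (0 : ℝ) < x := hx
    rw [Set.mem_iUnion]
    have h1 : 0 < ⌈x⌉₊ := Nat.ceil_pos.2 hx
    refine ⟨⌈x⌉₊ - 1, ?_, ?_⟩
    · rw [← Nat.lt_ceil]; omega
    · have := Nat.le_ceil x
      have h2 : ((⌈x⌉₊ - 1 : ℕ) : ℝ) + 1 = ⌈x⌉₊ := by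
        exact_mod_cast Nat.sub_add_cancel h1
      rw [h2]; exact this
  have hr : μ.restrict (⋃ n : ℕ, Set.Ioc (n : ℝ) (n + 1)) = μ := by
    apply Measure.restrict_eq_self_of_ae_mem
    filter_upwards [hpos] with x hx using hU hx
  rw [← hr]
  refine (lintegral_iUnion_le _ _).trans_lt ?_
  have hb : ∀ n : ℕ, ∫⁻ x in Set.Ioc (n : ℝ) (n + 1),
      ENNReal.ofReal (Real.exp (Real.log (3 / 2) * x)) ∂μ ≤
        ENNReal.ofReal ((3 / 4) ^ (n + 1)) := by
    intro n
    calc _ ≤ ∫⁻ x in Set.Ioc (n : ℝ) (n + 1), ENNReal.ofReal ((3 / 2) ^ (n + 1)) ∂μ := by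
          refine setLIntegral_mono measurable_const fun x hx => ?_
          apply ENNReal.ofReal_le_ofReal
          have : ((3 : ℝ) / 2) ^ (n + 1) = Real.exp (Real.log (3 / 2) * (n + 1)) := by
            rw [mul_comm]
            have := Real.exp_nat_mul (Real.log (3 / 2)) (n + 1)
            push_cast at this
            rw [this, Real.exp_log (by norm_num)]
          rw [this]
          apply Real.exp_le_exp.2
          exact mul_le_mul_of_nonneg_left hx.2 hlog.le
      _ = ENNReal.ofReal ((3 / 4) ^ (n + 1)) := by
          rw [setLIntegral_const, mu_Ioc hF hμ, ← ENNReal.ofReal_mul (by positivity), ← mul_pow]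
          norm_num
  refine (ENNReal.tsum_le_tsum hb).trans_lt ?_
  rw [← ENNReal.ofReal_tsum_of_nonneg (fun n => by positivity)]
  · exact ENNReal.ofReal_lt_top
  · exact (summable_nat_add_iff 1).2 (summable_geometric_of_lt_one (by norm_num) (by norm_num))

lemma two_sub_exp_ne (z : ℂ) (hz : ‖z‖ ≤ 6.3) (hne : z ≠ (Real.log 2 : ℂ)) :
    (2 : ℂ) - Complex.exp z ≠ 0 := by
  intro h
  have h2 : Complex.exp z = Complex.exp (Real.log 2 : ℂ) := by
    rw [← Complex.ofReal_exp, Real.exp_log (by norm_num)]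
    push_cast
    linear_combination -h
  rw [Complex.exp_eq_exp_iff_exists_int] at h2
  obtain ⟨n, hn⟩ := h2
  have hn0 : n ≠ 0 := by
    rintro rfl
    apply hne; simp [hn]
  have hre : z.re = Real.log 2 := by
    rw [hn]; generalize Real.log 2 = l; simp
  have him : z.im = n * (2 * π) := by
    rw [hn]; generalize Real.log 2 = l; simp
  have hsq : z.re ^ 2 + z.im ^ 2 ≤ 6.3 ^ 2 := by
    have : ‖z‖ ^ 2 = z.re ^ 2 + z.im ^ 2 := by
      rw [Complex.sq_norm, Complex.normSq_apply]; ring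
    rw [← this]
    exact pow_le_pow_left₀ (norm_nonneg _) hz 2
  rw [hre, him] at hsq
  have hn1 : (1 : ℝ) ≤ (n : ℝ) ^ 2 := by
    have : (1 : ℤ) ≤ n ^ 2 := by
      have : 0 < n ^ 2 := by positivity
      omega
    exact_mod_cast this
  have hl := Real.log_two_gt_d9
  have hp := Real.pi_gt_d4
  have h3 : (3.1415 : ℝ) ^ 2 ≤ π ^ 2 := pow_le_pow_left₀ (by norm_num) hp.le 2
  have h4 : (0.69 : ℝ) ^ 2 ≤ Real.log 2 ^ 2 := pow_le_pow_left₀ (by norm_num) (by linarith) 2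
  have h5 : π ^ 2 ≤ (n : ℝ) ^ 2 * π ^ 2 := le_mul_of_one_le_left (by positivity) hn1
  norm_num at h3 h4 hsq
  nlinarith

lemma cauchy_part (M m : ℂ → ℂ) (hm : Differentiable ℂ m) (hM : AnalyticAt ℂ M 0)
    (heq : ∀ᶠ z in nhds (0 : ℂ), M z * (2 - Complex.exp z) = m z) :
    ∃ C : ℝ, 0 < C ∧ ∀ L : ℕ,
      ‖iteratedDeriv L M 0 - m (Real.log 2 : ℂ) / 2 * (L.factorial / (Real.log 2 : ℂ) ^ (L + 1))‖ ≤
        L.factorial * C / 6.3 ^ L := by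
  set c : ℂ := (Real.log 2 : ℂ) with hc
  have hlog := Real.log_two_gt_d9
  have hlog2 := Real.log_two_lt_d9
  have hc0 : c ≠ 0 := by
    rw [hc]; exact_mod_cast (by linarith : Real.log 2 ≠ 0)
  have hexpc : Complex.exp c = 2 := by
    rw [hc, ← Complex.ofReal_exp, Real.exp_log (by norm_num)]; norm_num
  set g : ℂ → ℂ := fun z => 2 - Complex.exp z with hg
  have hgd : Differentiable ℂ g := by fun_prop
  have hgc : g c = 0 := by simp [hg, hexpc]
  set h : ℂ → ℂ := dslope g c with hh
  have hhd : Differentiable ℂ h := by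
    rw [← differentiableOn_univ] at hgd ⊢
    exact (Complex.differentiableOn_dslope univ_mem).2 hgd
  have hhg : ∀ z, (z - c) * h z = g z := by
    intro z
    have := sub_smul_dslope g c z
    rw [hgc, sub_zero, smul_eq_mul] at this
    exact this
  have hhc : h c = -2 := by
    rw [hh, dslope_same]
    have : HasDerivAt g (-Complex.exp c) c := (Complex.hasDerivAt_exp c).const_sub 2
    rw [this.deriv, hexpc]
  set U : Set ℂ := {z | h z ≠ 0} with hU
  have hUo : IsOpen U := isOpen_ne_fun hhd.continuous continuous_const
  have hcU : c ∈ U := by simp [hU, hhc]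
  have hball : Metric.closedBall (0 : ℂ) 6.3 ⊆ U := by
    intro z hz
    by_cases hzc : z = c
    · rw [hzc]; exact hcU
    · intro h0
      have := two_sub_exp_ne z (by simpa using hz) hzc
      apply this
      have := hhg z
      rw [h0, mul_zero] at this
      exact this.symm
  set K : ℂ → ℂ := fun z => m z / h z with hK
  have hKd : DifferentiableOn ℂ K U := by
    intro z hz
    exact ((hm z).div (hhd z) hz).differentiableWithinAt
  set G : ℂ → ℂ := dslope K c with hG
  have hGd : DifferentiableOn ℂ G U :=
    (Complex.differentiableOn_dslope (hUo.mem_nhds hcU)).2 hKd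
  have hGe : G =ᶠ[nhds 0] fun z => M z - m c / 2 * (1 * z - c)⁻¹ * (-1) := by
    have h1 : ∀ᶠ z in nhds (0 : ℂ), z ≠ c := isOpen_ne.mem_nhds hc0.symm
    have h2 : ∀ᶠ z in nhds (0 : ℂ), z ∈ U :=
      hUo.mem_nhds (hball (Metric.mem_closedBall_self (by norm_num)))
    filter_upwards [h1, h2, heq] with z hz1 hz2 hz3
    have hz1n : z - c ≠ 0 := sub_ne_zero.2 hz1
    have hz2n : h z ≠ 0 := hz2
    rw [hG, dslope_of_ne _ hz1, slope_def_field, hK]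
    simp only
    rw [hhc, ← hz3]
    have := hhg z
    simp only [hg] at this
    rw [← this]
    field_simp
  have hsph : ∃ C, ∀ z ∈ Metric.sphere (0 : ℂ) 6.3, ‖G z‖ ≤ C :=
    (isCompact_sphere 0 6.3).exists_bound_of_continuousOn
      (hGd.continuousOn.mono (Metric.sphere_subset_closedBall.trans hball))
  obtain ⟨C, hC⟩ := hsph
  have hdc : DiffContOnCl ℂ G (Metric.ball 0 6.3) :=
    (hGd.mono ((Metric.closure_ball_subset_closedBall).trans hball)).diffContOnCl
  refine ⟨max C 1, by positivity, fun L => ?_⟩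
  have hb := Complex.norm_iteratedDeriv_le_of_forall_mem_sphere_norm_le L
    (by norm_num : (0 : ℝ) < 6.3) hdc (C := max C 1) (fun z hz => (hC z hz).trans (le_max_left _ _))
  refine le_trans (le_of_eq ?_) hb
  congr 1
  rw [hGe.iteratedDeriv_eq L]
  have hinv : AnalyticAt ℂ (fun z : ℂ => (1 * z - c)⁻¹) 0 := by
    apply AnalyticAt.inv (by fun_prop) (by simpa using hc0)
  have e1 : (fun z => M z - m c / 2 * (1 * z - c)⁻¹ * (-1)) =
      M + fun z => (m c / 2) * (1 * z - c)⁻¹ := by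
    ext z; simp
  have hinv2 : AnalyticAt ℂ (fun z : ℂ => m c / 2 * (1 * z - c)⁻¹) 0 := analyticAt_const.mul hinv
  rw [e1, iteratedDeriv_add hM.contDiffAt hinv2.contDiffAt,
    iteratedDeriv_const_mul_field, iteratedDeriv_eq_iterate (f := fun z : ℂ => (1 * z - c)⁻¹),
    iter_deriv_inv_linear_sub]
  simp only [one_pow, mul_one, mul_zero, zero_sub]
  rw [show (-1 - (L : ℤ)) = -((L + 1 : ℕ) : ℤ) by push_cast; ring, zpow_neg, zpow_natCast, neg_pow c,
    pow_succ (-1 : ℂ)]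
  have : ((-1 : ℂ) ^ L) * (-1) ^ L = 1 := by rw [← mul_pow]; simp
  have h1 : ((-1 : ℂ) ^ L) ≠ 0 := by simp
  field_simp
  ring

/-- Let `F` be the limit distribution function of the Calkin–Wilf tree and `μ`
its Lebesgue–Stieltjes (probability) measure, so that `μ(a,b] = F(b) − F(a)`.
With `M_L = ∫ x^L dμ`, `m_k = ∫ (x/(x+1))^k dμ` and
`A = (1/(2·log 2))·∑_{k=0}^∞ m_k (log 2)^k / k!`, there is a constant `C > 0`
such that `|M_L − A·(log 2)^(−L)·L!| ≤ C·6.3^(−L)·L!` for every `L ≥ 0`;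
in particular `M_L ~ A·(log 2)^(−L)·L!` as `L → ∞`. -/
theorem calkin_wilf_moments_asymptotics (F : ℝ → ℝ)
    (hF : ∀ x : ℝ, 0 ≤ x → Tendsto (fun n => Fcw n x) atTop (nhds (F x)))
    (μ : Measure ℝ) (hprob : IsProbabilityMeasure μ)
    (hμ : ∀ a b : ℝ, a ≤ b → μ (Set.Ioc a b) = ENNReal.ofReal (F b - F a))
    (A : ℝ)
    (hA : A = 1 / (2 * Real.log 2) *
      ∑' k : ℕ, (∫ x, (x / (x + 1)) ^ k ∂μ) * (Real.log 2) ^ k / (k.factorial : ℝ)) :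
    ∃ C : ℝ, 0 < C ∧ ∀ L : ℕ,
      |(∫ x, x ^ L ∂μ) - A * (Real.log 2) ^ (-(L : ℤ)) * (L.factorial : ℝ)| ≤
        C * (6.3 : ℝ) ^ (-(L : ℤ)) * (L.factorial : ℝ) := by
  have hpos := mu_ae_pos hF hμ
  have hlog : 0 < Real.log (3 / 2) := Real.log_pos (by norm_num)
  have hl2 : 0 < Real.log 2 := Real.log_pos (by norm_num)
  have hint := mu_exp_integrable hF hμ
  set Y : ℝ → ℝ := fun x => x / (x + 1) with hY
  have hYm : Measurable Y := by fun_prop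
  have hsetX : Set.Iio (Real.log (3 / 2)) ⊆ ProbabilityTheory.integrableExpSet id μ := by
    intro t ht
    refine Integrable.mono' hint (by fun_prop) ?_
    filter_upwards [hpos] with x hx
    rw [Real.norm_eq_abs, abs_of_pos (Real.exp_pos _)]
    apply Real.exp_le_exp.2
    exact mul_le_mul_of_nonneg_right (le_of_lt ht) hx.le
  have hintX : Set.Iio (Real.log (3 / 2)) ⊆ interior (ProbabilityTheory.integrableExpSet id μ) :=
    isOpen_Iio.subset_interior_iff.2 hsetX
  have hYb : ∀ᵐ x ∂μ, 0 ≤ Y x ∧ Y x ≤ 1 := by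
    filter_upwards [hpos] with x hx
    refine ⟨by simp only [hY]; positivity, ?_⟩
    simp only [hY]
    rw [div_le_one (by positivity)]; linarith
  have hsetY : ProbabilityTheory.integrableExpSet Y μ = Set.univ := by
    refine Set.eq_univ_of_forall fun t => ?_
    refine Integrable.mono' (integrable_const (Real.exp |t|)) (by fun_prop) ?_
    filter_upwards [hYb] with x hx
    rw [Real.norm_eq_abs, abs_of_pos (Real.exp_pos _)]
    apply Real.exp_le_exp.2
    calc t * Y x ≤ |t| * Y x := mul_le_mul_of_nonneg_right (le_abs_self t) hx.1
      _ ≤ |t| * 1 := mul_le_mul_of_nonneg_left hx.2 (abs_nonneg t)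
      _ = |t| := mul_one _
  have hintY : ∀ t : ℝ, t ∈ interior (ProbabilityTheory.integrableExpSet Y μ) := by
    intro t; rw [hsetY]; simp
  have hm : Differentiable ℂ (ProbabilityTheory.complexMGF Y μ) := fun z =>
    (ProbabilityTheory.hasDerivAt_complexMGF (hintY z.re)).differentiableAt
  have h0X : (0 : ℂ).re ∈ interior (ProbabilityTheory.integrableExpSet id μ) :=
    hintX (by simpa using hlog)
  have hM : AnalyticAt ℂ (ProbabilityTheory.complexMGF id μ) 0 :=
    ProbabilityTheory.analyticAt_complexMGF h0X
  have heq : ∀ᶠ z in nhds (0 : ℂ), ProbabilityTheory.complexMGF id μ z * (2 - Complex.exp z) =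
      ProbabilityTheory.complexMGF Y μ z := by
    have h1 : ∀ᶠ z in nhds (0 : ℂ), z.re < Real.log (3 / 2) :=
      (isOpen_Iio.preimage Complex.continuous_re).mem_nhds (by simpa using hlog)
    filter_upwards [h1] with z hz
    have hiX : Integrable (fun x : ℝ => Complex.exp (z * x)) μ := by
      have := ProbabilityTheory.integrable_pow_mul_cexp_of_re_mem_interior_integrableExpSet
        (hintX hz) 0
      simpa using this
    have hiY : Integrable (fun x : ℝ => Complex.exp (z * (Y x : ℝ))) μ := by
      have := ProbabilityTheory.integrable_pow_mul_cexp_of_re_mem_interior_integrableExpSet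
        (hintY z.re) 0
      simpa using this
    have hS : Measurable (fun x : ℝ => x + 1) := by fun_prop
    have hinv := mu_invariant hF hμ
    have e1 : ∀ x : ℝ, Complex.exp (z * ((x + 1 : ℝ) : ℂ)) = Complex.exp z * Complex.exp (z * x) := by
      intro x
      rw [← Complex.exp_add]; congr 1; push_cast; ring
    have hf : ∀ ν : Measure ℝ, AEStronglyMeasurable (fun x : ℝ => Complex.exp (z * x)) ν := by
      intro ν; fun_prop
    have hiS' : Integrable (fun x : ℝ => Complex.exp (z * x)) (μ.map (fun x => x + 1)) := by
      rw [integrable_map_measure (hf _) hS.aemeasurable]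
      simp only [Function.comp_def, e1]
      exact hiX.const_mul _
    have hiY' : Integrable (fun x : ℝ => Complex.exp (z * x)) (μ.map Y) := by
      rw [integrable_map_measure (hf _) hYm.aemeasurable]
      exact hiY
    have key : ∫ x : ℝ, Complex.exp (z * x) ∂(μ + μ) =
        ∫ x : ℝ, Complex.exp (z * x) ∂(μ.map (fun x => x + 1) + μ.map Y) := by rw [hinv]
    rw [integral_add_measure hiX hiX, integral_add_measure hiS' hiY',
      integral_map hS.aemeasurable (hf _), integral_map hYm.aemeasurable (hf _)] at key
    simp only [e1] at key
    rw [integral_const_mul] at key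
    simp only [ProbabilityTheory.complexMGF, id]
    linear_combination key
  have hAc : (A : ℂ) = ProbabilityTheory.complexMGF Y μ (Real.log 2 : ℂ) / (2 * (Real.log 2 : ℂ)) := by
    have hs := Complex.hasSum_taylorSeries_of_entire hm 0 (Real.log 2 : ℂ)
    have hterm : ∀ k : ℕ, ((k.factorial : ℂ)⁻¹ • ((Real.log 2 : ℂ) - 0) ^ k •
        iteratedDeriv k (ProbabilityTheory.complexMGF Y μ) 0) =
        (((∫ x, (x / (x + 1)) ^ k ∂μ) * (Real.log 2) ^ k / (k.factorial : ℝ) : ℝ) : ℂ) := by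
      intro k
      rw [ProbabilityTheory.iteratedDeriv_complexMGF (hintY _)]
      have : ∫ x, ((Y x : ℝ) : ℂ) ^ k * Complex.exp (0 * (Y x : ℝ)) ∂μ =
          ((∫ x, (x / (x + 1)) ^ k ∂μ : ℝ) : ℂ) := by
        rw [← integral_complex_ofReal]
        congr 1; ext x; simp [hY]
      rw [this, smul_eq_mul, smul_eq_mul, sub_zero, Complex.ofReal_div, Complex.ofReal_mul,
        Complex.ofReal_pow, Complex.ofReal_natCast]
      field_simp
    simp only [hterm] at hs
    rw [hA, Complex.ofReal_mul, Complex.ofReal_tsum, hs.tsum_eq, Complex.ofReal_div,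
      Complex.ofReal_mul, Complex.ofReal_one, Complex.ofReal_ofNat]
    field_simp
  obtain ⟨C, hC0, hC⟩ := cauchy_part _ _ hm hM heq
  refine ⟨C, hC0, fun L => ?_⟩
  have h := hC L
  rw [ProbabilityTheory.iteratedDeriv_complexMGF h0X] at h
  have hl2n : (Real.log 2 : ℂ) ≠ 0 := by exact_mod_cast hl2.ne'
  have e2 : ∫ x : ℝ, ((id x : ℝ) : ℂ) ^ L * Complex.exp (0 * (id x : ℝ)) ∂μ =
      ((∫ x, x ^ L ∂μ : ℝ) : ℂ) := by
    rw [← integral_complex_ofReal]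
    congr 1; ext x; simp
  have e3 : ProbabilityTheory.complexMGF Y μ (Real.log 2 : ℂ) / 2 *
      (L.factorial / (Real.log 2 : ℂ) ^ (L + 1)) =
      ((A * (Real.log 2) ^ (-(L : ℤ)) * (L.factorial : ℝ) : ℝ) : ℂ) := by
    rw [Complex.ofReal_mul, Complex.ofReal_mul, hAc, Complex.ofReal_zpow, zpow_neg, zpow_natCast,
      Complex.ofReal_natCast, pow_succ]
    field_simp
  rw [e2, e3, ← Complex.ofReal_sub, Complex.norm_real, Real.norm_eq_abs] at h
  refine h.trans (le_of_eq ?_)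
  rw [zpow_neg, zpow_natCast]
  ring
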